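/- Let 𝒜 be a weakly idempotent complete exact category, (𝒳,𝒴) a complete cotorsion pair in 𝒜, and ω = 𝒳∩𝒴. If (CoFib_ω, Fib_ω, Weq_ω) is a closed model structure on 𝒜, then the cotorsion pair (𝒳,𝒴) is hereditary. -/

import Mathlib

open CategoryTheory Limits ZeroObject

universe v u

/-- An exact structure (Quillen exact category) on an additive category `𝒜`:
a class of conflations (kernel-cokernel pairs), closed under isomorphisms,
with identities deflations, deflations closed under composition and stable
under pullback, and inflations stable under pushout. -/
structure ExactStructure (𝒜 : Type u) [Category.{v} 𝒜] [Preadditive 𝒜]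
    [HasZeroObject 𝒜] [HasBinaryBiproducts 𝒜] : Type (max u v) where
  conflation : ∀ ⦃X Y Z : 𝒜⦄, (X ⟶ Y) → (Y ⟶ Z) → Prop
  comp_zero : ∀ {X Y Z : 𝒜} {i : X ⟶ Y} {d : Y ⟶ Z}, conflation i d → i ≫ d = 0
  isKernel : ∀ {X Y Z : 𝒜} {i : X ⟶ Y} {d : Y ⟶ Z} (h : conflation i d),
    Nonempty (IsLimit (KernelFork.ofι i (comp_zero h)))
  isCokernel : ∀ {X Y Z : 𝒜} {i : X ⟶ Y} {d : Y ⟶ Z} (h : conflation i d),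
    Nonempty (IsColimit (CokernelCofork.ofπ d (comp_zero h)))
  conflation_iso : ∀ {X Y Z X' Y' Z' : 𝒜} {i : X ⟶ Y} {d : Y ⟶ Z}
    (eX : X ≅ X') (eY : Y ≅ Y') (eZ : Z ≅ Z') {i' : X' ⟶ Y'} {d' : Y' ⟶ Z'},
    conflation i d → i ≫ eY.hom = eX.hom ≫ i' → d ≫ eZ.hom = eY.hom ≫ d' →
    conflation i' d'
  id_deflation : ∀ X : 𝒜, conflation (0 : (0 : 𝒜) ⟶ X) (𝟙 X)
  deflation_comp : ∀ {X Y Z X' W : 𝒜} {i : X ⟶ Y} {d : Y ⟶ Z} {i' : X' ⟶ Z} {d' : Z ⟶ W},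
    conflation i d → conflation i' d' → ∃ (K : 𝒜) (k : K ⟶ Y), conflation k (d ≫ d')
  pullback_deflation : ∀ {X Y Z Z' : 𝒜} {i : X ⟶ Y} {d : Y ⟶ Z},
    conflation i d → ∀ (f : Z' ⟶ Z),
    ∃ (Y' : 𝒜) (f' : Y' ⟶ Y) (d' : Y' ⟶ Z') (K : 𝒜) (k : K ⟶ Y'),
      IsPullback f' d' d f ∧ conflation k d'
  pushout_inflation : ∀ {X Y Z X' : 𝒜} {i : X ⟶ Y} {d : Y ⟶ Z},
    conflation i d → ∀ (f : X ⟶ X'),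
    ∃ (Y' : 𝒜) (f' : Y ⟶ Y') (i' : X' ⟶ Y') (Q : 𝒜) (q : Y' ⟶ Q),
      IsPushout i f f' i' ∧ conflation i' q

variable {𝒜 : Type u} [Category.{v} 𝒜] [Preadditive 𝒜] [HasZeroObject 𝒜]
  [HasBinaryBiproducts 𝒜]

/-- `f` is an inflation: the first map of some conflation. -/
def IsInflation (E : ExactStructure 𝒜) {X Y : 𝒜} (i : X ⟶ Y) : Prop :=
  ∃ (Z : 𝒜) (d : Y ⟶ Z), E.conflation i d

/-- `f` is a deflation: the second map of some conflation. -/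
def IsDeflation (E : ExactStructure 𝒜) {Y Z : 𝒜} (d : Y ⟶ Z) : Prop :=
  ∃ (X : 𝒜) (i : X ⟶ Y), E.conflation i d

/-- `𝒜` is weakly idempotent complete: every split epimorphism is a deflation. -/
def IsWIC (E : ExactStructure 𝒜) : Prop :=
  ∀ {X Y : 𝒜} (d : X ⟶ Y) (s : Y ⟶ X), s ≫ d = 𝟙 Y → IsDeflation E d

/-- `Ext¹(A,B) = 0`: every conflation `B ⟶ M ⟶ A` splits. -/
def Ext1IsZero (E : ExactStructure 𝒜) (A B : 𝒜) : Prop :=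
  ∀ {M : 𝒜} (i : B ⟶ M) (d : M ⟶ A), E.conflation i d → ∃ r : M ⟶ B, i ≫ r = 𝟙 B

/-- `(X, Y)` is a cotorsion pair: each class is the `Ext¹`-orthogonal of the other. -/
def IsCotorsionPair (E : ExactStructure 𝒜) (X Y : Set 𝒜) : Prop :=
  (∀ A : 𝒜, A ∈ X ↔ ∀ B ∈ Y, Ext1IsZero E A B) ∧
  (∀ B : 𝒜, B ∈ Y ↔ ∀ A ∈ X, Ext1IsZero E A B)

/-- Completeness of a cotorsion pair: every object has approximation sequences. -/
def IsCompleteCP (E : ExactStructure 𝒜) (X Y : Set 𝒜) : Prop :=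
  ∀ A : 𝒜,
    (∃ (Y₀ X₀ : 𝒜) (i : Y₀ ⟶ X₀) (d : X₀ ⟶ A), E.conflation i d ∧ X₀ ∈ X ∧ Y₀ ∈ Y) ∧
    (∃ (Y₁ X₁ : 𝒜) (i : A ⟶ Y₁) (d : Y₁ ⟶ X₁), E.conflation i d ∧ X₁ ∈ X ∧ Y₁ ∈ Y)

/-- Heredity of a cotorsion pair: `X` is closed under kernels of deflations and
`Y` is closed under cokernels of inflations. -/
def IsHereditaryCP (E : ExactStructure 𝒜) (X Y : Set 𝒜) : Prop :=
  (∀ {K A B : 𝒜} (i : K ⟶ A) (d : A ⟶ B), E.conflation i d → A ∈ X → B ∈ X → K ∈ X) ∧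
  (∀ {K A B : 𝒜} (i : K ⟶ A) (d : A ⟶ B), E.conflation i d → K ∈ Y → A ∈ Y → B ∈ Y)

/-- `t : W ⟶ B` is a right `ω`-approximation of `B`. -/
def IsRightApprox (ω : Set 𝒜) {W B : 𝒜} (t : W ⟶ B) : Prop :=
  W ∈ ω ∧ ∀ (W' : 𝒜), W' ∈ ω → ∀ g : W' ⟶ B, ∃ h : W' ⟶ W, h ≫ t = g

/-- `ω` is contravariantly finite: every object has a right `ω`-approximation. -/
def IsContravariantlyFinite (ω : Set 𝒜) : Prop :=
  ∀ B : 𝒜, ∃ (W : 𝒜) (t : W ⟶ B), IsRightApprox ω t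

/-- A full additive subcategory closed under isomorphisms and direct summands,
viewed as a class of objects. -/
def AdditivelyClosed (S : Set 𝒜) : Prop :=
  (0 : 𝒜) ∈ S ∧ (∀ A B : 𝒜, A ∈ S → B ∈ S → (A ⊞ B) ∈ S) ∧
  (∀ {A B : 𝒜}, (A ≅ B) → A ∈ S → B ∈ S) ∧
  (∀ {A B : 𝒜} (i : A ⟶ B) (r : B ⟶ A), i ≫ r = 𝟙 A → B ∈ S → A ∈ S)

/-- `CoFib_ω`: inflations with cokernel in `X`. -/
def CoFibO (E : ExactStructure 𝒜) (X : Set 𝒜) : MorphismProperty 𝒜 :=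
  fun _ B f => ∃ (Z : 𝒜) (d : B ⟶ Z), E.conflation f d ∧ Z ∈ X

/-- `Fib_ω`: the `ω`-epic morphisms. -/
def FibO (ω : Set 𝒜) : MorphismProperty 𝒜 :=
  fun A B f => ∀ (W : 𝒜), W ∈ ω → ∀ g : W ⟶ B, ∃ h : W ⟶ A, h ≫ f = g

/-- `Weq_ω`: morphisms `f : A ⟶ B` such that for some `W ∈ ω` and `t : W ⟶ B`,
`(f,t) : A ⊞ W ⟶ B` is a deflation with kernel in `Y`. -/
def WeqO (E : ExactStructure 𝒜) (ω Y : Set 𝒜) : MorphismProperty 𝒜 :=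
  fun A B f => ∃ (W : 𝒜) (_ : W ∈ ω) (t : W ⟶ B) (K : 𝒜) (k : K ⟶ A ⊞ W),
    E.conflation k (biprod.desc f t) ∧ K ∈ Y

/-- `TCoFib_ω`: split monomorphisms with cokernel in `ω`. -/
def TCoFibO (E : ExactStructure 𝒜) (ω : Set 𝒜) : MorphismProperty 𝒜 :=
  fun A B f => (∃ r : B ⟶ A, f ≫ r = 𝟙 A) ∧
    ∃ (Z : 𝒜) (d : B ⟶ Z), E.conflation f d ∧ Z ∈ ω

/-- `TFib_ω`: deflations with kernel in `Y`. -/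
def TFibO (E : ExactStructure 𝒜) (Y : Set 𝒜) : MorphismProperty 𝒜 :=
  fun A _ f => ∃ (K : 𝒜) (k : K ⟶ A), E.conflation k f ∧ K ∈ Y

/-- `g` is a retract of `f`. -/
def IsRetractMor {A' B' A B : 𝒜} (g : A' ⟶ B') (f : A ⟶ B) : Prop :=
  ∃ (φ₁ : A' ⟶ A) (ψ₁ : A ⟶ A') (φ₂ : B' ⟶ B) (ψ₂ : B ⟶ B'),
    φ₁ ≫ ψ₁ = 𝟙 A' ∧ φ₂ ≫ ψ₂ = 𝟙 B' ∧ φ₁ ≫ f = g ≫ φ₂ ∧ f ≫ ψ₂ = ψ₁ ≫ g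

/-- A (closed, Quillen) model structure, given by classes of cofibrations,
fibrations and weak equivalences. -/
structure IsModelStructure (C F W : MorphismProperty 𝒜) : Prop where
  weq_comp : ∀ {X Y Z : 𝒜} (f : X ⟶ Y) (g : Y ⟶ Z), W f → W g → W (f ≫ g)
  weq_cancel_left : ∀ {X Y Z : 𝒜} (f : X ⟶ Y) (g : Y ⟶ Z), W f → W (f ≫ g) → W g
  weq_cancel_right : ∀ {X Y Z : 𝒜} (f : X ⟶ Y) (g : Y ⟶ Z), W g → W (f ≫ g) → W f
  retract_cofib : ∀ {A' B' A B : 𝒜} (g : A' ⟶ B') (f : A ⟶ B),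
    IsRetractMor g f → C f → C g
  retract_fib : ∀ {A' B' A B : 𝒜} (g : A' ⟶ B') (f : A ⟶ B),
    IsRetractMor g f → F f → F g
  retract_weq : ∀ {A' B' A B : 𝒜} (g : A' ⟶ B') (f : A ⟶ B),
    IsRetractMor g f → W f → W g
  lifting_left : ∀ {A B X Y : 𝒜} (i : A ⟶ B) (p : X ⟶ Y) (a : A ⟶ X) (b : B ⟶ Y),
    C i → W i → F p → a ≫ p = i ≫ b → ∃ s : B ⟶ X, i ≫ s = a ∧ s ≫ p = b
  lifting_right : ∀ {A B X Y : 𝒜} (i : A ⟶ B) (p : X ⟶ Y) (a : A ⟶ X) (b : B ⟶ Y),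
    C i → F p → W p → a ≫ p = i ≫ b → ∃ s : B ⟶ X, i ≫ s = a ∧ s ≫ p = b
  fact_left : ∀ {A B : 𝒜} (f : A ⟶ B), ∃ (Z : 𝒜) (i : A ⟶ Z) (p : Z ⟶ B),
    i ≫ p = f ∧ C i ∧ W i ∧ F p
  fact_right : ∀ {A B : 𝒜} (f : A ⟶ B), ∃ (Z : 𝒜) (j : A ⟶ Z) (q : Z ⟶ B),
    j ≫ q = f ∧ C j ∧ F q ∧ W q

/-- An object is cofibrant if `0 ⟶ X` is a cofibration. -/
def Cofibrant (C : MorphismProperty 𝒜) (A : 𝒜) : Prop := C (0 : (0 : 𝒜) ⟶ A)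

/-- An object is fibrant if `X ⟶ 0` is a fibration. -/
def Fibrant (F : MorphismProperty 𝒜) (A : 𝒜) : Prop := F (0 : A ⟶ (0 : 𝒜))

/-- An object is trivial if `0 ⟶ X` is a weak equivalence. -/
def TrivialObj (W : MorphismProperty 𝒜) (A : 𝒜) : Prop := W (0 : (0 : 𝒜) ⟶ A)

/-- `P` is projective in the exact category. -/
def IsProjObj (E : ExactStructure 𝒜) (P : 𝒜) : Prop :=
  ∀ {A B : 𝒜} (d : A ⟶ B), IsDeflation E d → ∀ g : P ⟶ B, ∃ h : P ⟶ A, h ≫ d = g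

/-- The exact category has enough projective objects. -/
def HasEnoughProj (E : ExactStructure 𝒜) : Prop :=
  ∀ X : 𝒜, ∃ (P : 𝒜) (d : P ⟶ X), IsProjObj E P ∧ IsDeflation E d

/-- Cofibrations are exactly the inflations with cofibrant cokernel. -/
def CofibsAreInflWithCofibCoker (E : ExactStructure 𝒜) (C : MorphismProperty 𝒜) : Prop :=
  ∀ {A B : 𝒜} (f : A ⟶ B),
    C f ↔ ∃ (Z : 𝒜) (d : B ⟶ Z), E.conflation f d ∧ Cofibrant C Z

/-- Fibrations are exactly the deflations with fibrant kernel. -/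
def FibsAreDeflWithFibKer (E : ExactStructure 𝒜) (F : MorphismProperty 𝒜) : Prop :=
  ∀ {A B : 𝒜} (f : A ⟶ B),
    F f ↔ ∃ (K : 𝒜) (k : K ⟶ A), E.conflation k f ∧ Fibrant F K

/-- Trivial fibrations are exactly the deflations with trivially fibrant kernel. -/
def TrivFibsAreDeflWithTrivFibKer (E : ExactStructure 𝒜)
    (F W : MorphismProperty 𝒜) : Prop :=
  ∀ {A B : 𝒜} (f : A ⟶ B),
    (F f ∧ W f) ↔ ∃ (K : 𝒜) (k : K ⟶ A), E.conflation k f ∧ Fibrant F K ∧ TrivialObj W K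

/-- Every cofibration is an inflation. -/
def CofibsAreInfl (E : ExactStructure 𝒜) (C : MorphismProperty 𝒜) : Prop :=
  ∀ {A B : 𝒜} (f : A ⟶ B), C f → IsInflation E f

/-- Every trivial fibration is a deflation. -/
def TrivFibsAreDefl (E : ExactStructure 𝒜) (F W : MorphismProperty 𝒜) : Prop :=
  ∀ {A B : 𝒜} (f : A ⟶ B), F f → W f → IsDeflation E f

/-- An exact model structure in the sense of Gillespie. -/
def IsExactModelStr (E : ExactStructure 𝒜) (C F W : MorphismProperty 𝒜) : Prop :=
  IsModelStructure C F W ∧ CofibsAreInflWithCofibCoker E C ∧ FibsAreDeflWithFibKer E F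

/-- A weakly projective model structure: every object is fibrant, cofibrations are
exactly the inflations with cofibrant cokernel, and trivial fibrations are exactly
the deflations with trivially fibrant kernel. -/
def IsWeaklyProjModelStr (E : ExactStructure 𝒜) (C F W : MorphismProperty 𝒜) : Prop :=
  IsModelStructure C F W ∧ (∀ A : 𝒜, Fibrant F A) ∧
    CofibsAreInflWithCofibCoker E C ∧ TrivFibsAreDeflWithTrivFibKer E F W

/-- A projective model structure: an exact model structure with every object fibrant. -/
def IsProjectiveModelStr (E : ExactStructure 𝒜) (C F W : MorphismProperty 𝒜) : Prop :=
  IsExactModelStr E C F W ∧ (∀ A : 𝒜, Fibrant F A)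

/-- A class of objects is thick: closed under direct summands and two-out-of-three
in conflations. -/
def IsThick (E : ExactStructure 𝒜) (S : Set 𝒜) : Prop :=
  (∀ {A B : 𝒜} (i : A ⟶ B) (r : B ⟶ A), i ≫ r = 𝟙 A → B ∈ S → A ∈ S) ∧
  (∀ {X Y Z : 𝒜} (i : X ⟶ Y) (d : Y ⟶ Z), E.conflation i d →
    ((X ∈ S → Y ∈ S → Z ∈ S) ∧ (X ∈ S → Z ∈ S → Y ∈ S) ∧ (Y ∈ S → Z ∈ S → X ∈ S)))


/-!
A conflation `F ⟶ M ⟶ K` with `F ∈ Y` splits if `K` is the kernel of a deflation `A ⟶ B` with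
`A, B ∈ X`, provided `Y` is closed under cokernels of inflations. Embed `M` into some `F' ∈ Y` by an
inflation and let `C` be the pushout of `F' ⟵ M ⟶ K`. This square is also a pullback and
`F ⟶ F' ⟶ C` is a conflation, so `C ∈ Y`. Hence `K ⟶ C` extends to `A ⟶ C`, which lifts to
`A ⟶ F'`, and the restriction `K ⟶ F'` together with `𝟙 K` defines a section of `M ⟶ K`.

Closure of `Y` under cokernels comes from left cancellation of weak equivalences: if `K ⟶ A ⟶ B` is
a conflation with `K, A ∈ Y`, then `A ⟶ B` and `A ⟶ 0` are weak equivalences, hence so is `B ⟶ 0`,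
which exhibits `B` as a retract of an object of `Y`.
-/

variable {E : ExactStructure 𝒜}

namespace ExactStructure.conflation

variable {A B C : 𝒜} {i : A ⟶ B} {d : B ⟶ C}

lemma isPullback (h : E.conflation i d) : IsPullback i (0 : A ⟶ 0) d (0 : 0 ⟶ C) := by
  obtain ⟨hi⟩ := E.isKernel h
  refine .mk' (by simp [E.comp_zero h]) (fun _ φ φ' hφ _ ↦ Fork.IsLimit.hom_ext hi hφ)
    fun _ a b hab ↦ ?_
  obtain ⟨l, hl⟩ := KernelFork.IsLimit.lift' hi a (by simpa using hab)
  exact ⟨l, hl, (isZero_zero 𝒜).eq_of_tgt _ _⟩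

lemma isPushout (h : E.conflation i d) : IsPushout i (0 : A ⟶ 0) d (0 : 0 ⟶ C) := by
  obtain ⟨hd⟩ := E.isCokernel h
  refine .mk' (by simp [E.comp_zero h]) (fun _ φ φ' hφ _ ↦ Cofork.IsColimit.hom_ext hd hφ)
    fun _ a b hab ↦ ?_
  obtain ⟨l, hl⟩ := CokernelCofork.IsColimit.desc' hd a (by simpa using hab)
  exact ⟨l, hl, (isZero_zero 𝒜).eq_of_src _ _⟩

lemma mono (h : E.conflation i d) : Mono i :=
  ⟨fun _ _ hab ↦ h.isPullback.hom_ext hab ((isZero_zero 𝒜).eq_of_tgt _ _)⟩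

lemma epi (h : E.conflation i d) : Epi d :=
  ⟨fun _ _ hab ↦ h.isPushout.hom_ext hab ((isZero_zero 𝒜).eq_of_src _ _)⟩

lemma isInflation (h : E.conflation i d) : IsInflation E i := ⟨C, d, h⟩

lemma isDeflation (h : E.conflation i d) : IsDeflation E d := ⟨A, i, h⟩

lemma exists_section_of_retraction (h : E.conflation i d) (r : B ⟶ A) (hr : i ≫ r = 𝟙 A) :
    ∃ s : C ⟶ B, s ≫ d = 𝟙 C := by
  have := h.epi
  obtain ⟨s, hs, -⟩ := h.isPushout.exists_desc (𝟙 B - r ≫ i) 0 (by simp [reassoc_of% hr])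
  refine ⟨s, ?_⟩
  rw [← cancel_epi d, reassoc_of% hs]
  simp [E.comp_zero h]

lemma exists_retraction_of_section (h : E.conflation i d) (s : C ⟶ B) (hs : s ≫ d = 𝟙 C) :
    ∃ r : B ⟶ A, i ≫ r = 𝟙 A := by
  have := h.mono
  obtain ⟨r, hr, -⟩ := h.isPullback.exists_lift (𝟙 B - d ≫ s) 0 (by simp [hs])
  refine ⟨r, ?_⟩
  rw [← cancel_mono i, Category.assoc, hr]
  simp [reassoc_of% E.comp_zero h]

end ExactStructure.conflation

lemma IsDeflation.conflation_of_isPullback_zero {K A B : 𝒜} {k : K ⟶ A} {d : A ⟶ B}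
    (hd : IsDeflation E d) (hk : IsPullback k (0 : K ⟶ 0) d (0 : 0 ⟶ B)) : E.conflation k d := by
  obtain ⟨_, i, hi⟩ := hd
  exact E.conflation_iso (hi.isPullback.isoIsPullback _ _ hk) (.refl _) (.refl _) hi
    (by simp) (by simp)

lemma IsInflation.conflation_of_isPushout_zero {A B C : 𝒜} {i : A ⟶ B} {c : B ⟶ C}
    (hi : IsInflation E i) (hc : IsPushout i (0 : A ⟶ 0) c (0 : 0 ⟶ C)) : E.conflation i c := by
  obtain ⟨_, d, hd⟩ := hi
  exact E.conflation_iso (.refl _) (.refl _) (hd.isPushout.isoIsPushout _ _ hc) hd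
    (by simp) (by simp)

lemma IsDeflation.of_isPullback {P B C C' : 𝒜} {f' : P ⟶ B} {d' : P ⟶ C'} {d : B ⟶ C} {f : C' ⟶ C}
    (hd : IsDeflation E d) (hp : IsPullback f' d' d f) : IsDeflation E d' := by
  obtain ⟨_, _, hid⟩ := hd
  obtain ⟨_, _, _, K, k, hp', hk⟩ := E.pullback_deflation hid f
  exact ⟨K, k ≫ (hp'.isoIsPullback _ _ hp).hom,
    E.conflation_iso (.refl _) (hp'.isoIsPullback _ _ hp) (.refl _) hk (by simp) (by simp)⟩

lemma IsInflation.of_isPushout {A A' B P : 𝒜} {i : A ⟶ B} {f : A ⟶ A'} {f' : B ⟶ P} {i' : A' ⟶ P}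
    (hi : IsInflation E i) (hp : IsPushout i f f' i') : IsInflation E i' := by
  obtain ⟨_, _, hid⟩ := hi
  obtain ⟨_, _, _, Q, q, hp', hq⟩ := E.pushout_inflation hid f
  exact ⟨Q, (hp'.isoIsPushout _ _ hp).inv ≫ q,
    E.conflation_iso (.refl _) (hp'.isoIsPushout _ _ hp) (.refl _) hq (by simp) (by simp)⟩

namespace ExactStructure.conflation

variable {A B C : 𝒜} {i : A ⟶ B} {d : B ⟶ C}

lemma exists_conflation_of_isPullback {P C' : 𝒜} {f' : P ⟶ B} {d' : P ⟶ C'} {f : C' ⟶ C}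
    (h : E.conflation i d) (hp : IsPullback f' d' d f) :
    ∃ i' : A ⟶ P, i' ≫ f' = i ∧ E.conflation i' d' := by
  obtain ⟨i', hi', hd'⟩ := hp.exists_lift i 0 (by simp [E.comp_zero h])
  refine ⟨i', hi', (h.isDeflation.of_isPullback hp).conflation_of_isPullback_zero ?_⟩
  exact .of_right (by simpa [hi'] using h.isPullback) (by simp [hd']) hp

lemma exists_conflation_of_isPushout {A' P : 𝒜} {f : A ⟶ A'} {f' : B ⟶ P} {i' : A' ⟶ P}
    (h : E.conflation i d) (hp : IsPushout i f f' i') :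
    ∃ d' : P ⟶ C, f' ≫ d' = d ∧ E.conflation i' d' := by
  obtain ⟨d', hd', hi'⟩ := hp.exists_desc d 0 (by simp [E.comp_zero h])
  refine ⟨d', hd', (h.isInflation.of_isPushout hp).conflation_of_isPushout_zero ?_⟩
  exact .of_top (by simpa [hd'] using h.isPushout) (by simp [hi']) hp

lemma isPushout_of_isPullback {P C' : 𝒜} {f' : P ⟶ B} {d' : P ⟶ C'} {f : C' ⟶ C}
    (h : E.conflation i d) (hp : IsPullback f' d' d f) : IsPushout f' d' d f := by
  obtain ⟨i', hi', h'⟩ := h.exists_conflation_of_isPullback hp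
  exact .of_left (by simpa [hi'] using h.isPushout) hp.w h'.isPushout

lemma isPullback_of_isPushout {A' P : 𝒜} {f : A ⟶ A'} {f' : B ⟶ P} {i' : A' ⟶ P}
    (h : E.conflation i d) (hp : IsPushout i f f' i') : IsPullback i f f' i' := by
  obtain ⟨d', hd', h'⟩ := h.exists_conflation_of_isPushout hp
  exact .of_bot (by simpa [hd'] using h.isPullback) hp.w h'.isPullback

end ExactStructure.conflation

lemma ExactStructure.conflation_id_zero (E : ExactStructure 𝒜) (A : 𝒜) :
    E.conflation (𝟙 A) (0 : A ⟶ 0) := by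
  obtain ⟨d, -, h⟩ := (E.id_deflation 0).exists_conflation_of_isPushout (IsPushout.zero_top A)
  rwa [(isZero_zero 𝒜).eq_of_tgt d 0] at h

lemma IsDeflation.comp {A B C : 𝒜} {d : A ⟶ B} {d' : B ⟶ C} (hd : IsDeflation E d)
    (hd' : IsDeflation E d') : IsDeflation E (d ≫ d') := by
  obtain ⟨_, _, hd⟩ := hd
  obtain ⟨_, _, hd'⟩ := hd'
  exact E.deflation_comp hd hd'

lemma IsDeflation.biprod_map_id {B C : 𝒜} {d : B ⟶ C} (hd : IsDeflation E d) (T : 𝒜) :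
    IsDeflation E (biprod.map (𝟙 T) d) :=
  hd.of_isPullback (f' := biprod.snd) (f := biprod.snd) <| .of_bot
    (by simpa using (IsPullback.of_has_biproduct T B).flip) (by simp)
    (IsPullback.of_has_biproduct T C).flip

/-- The map `(g, k)` is the pullback of `g ≫ d` along `d`, the other projection being `biprod.fst`
because `d` vanishes on `k`. -/
lemma ExactStructure.conflation.isDeflation_biprod_desc {K B C T : 𝒜} {k : K ⟶ B} {d : B ⟶ C}
    (h : E.conflation k d) {g : T ⟶ B} (hg : IsDeflation E (g ≫ d)) :
    IsDeflation E (biprod.desc g k) := by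
  have := h.mono
  refine hg.of_isPullback (f' := biprod.fst) (f := d)
    (.mk' (by ext <;> simp [E.comp_zero h]) (fun _ φ φ' hfst hdesc ↦ ?_) fun _ t b htb ↦ ?_)
  · ext
    · exact hfst
    · rw [biprod.desc_eq, Preadditive.comp_add, Preadditive.comp_add, reassoc_of% hfst,
        add_right_inj, ← Category.assoc, ← Category.assoc, cancel_mono] at hdesc
      exact hdesc
  · obtain ⟨l, hl, -⟩ := h.isPullback.exists_lift (b - t ≫ g) 0 (by simp [htb])
    exact ⟨biprod.lift t l, by simp, by simp [hl]⟩

lemma IsDeflation.of_comp {K A B C : 𝒜} {s : A ⟶ B} {k : K ⟶ B} {p : B ⟶ C}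
    (hs : IsDeflation E s) (hsp : IsDeflation E (s ≫ p))
    (hk : IsPullback k (0 : K ⟶ 0) p (0 : 0 ⟶ C)) : IsDeflation E p := by
  obtain ⟨_, _, hs⟩ := hs
  obtain ⟨L, l, hl⟩ := hsp
  obtain ⟨w, hw, -⟩ := hk.exists_lift (l ≫ s) 0 (by simp [E.comp_zero hl])
  have hsq : IsPullback l w s k := .of_bot (by simpa using hl.isPullback) hw.symm hk
  obtain ⟨p', hp', h⟩ := hl.exists_conflation_of_isPushout (hs.isPushout_of_isPullback hsq)
  have := hs.epi
  rw [cancel_epi] at hp'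
  exact hp' ▸ h.isDeflation

theorem ExactStructure.conflation.comp_inflation {F M K B D P : 𝒜} {a : F ⟶ M} {p : M ⟶ K}
    {i : M ⟶ B} {q : B ⟶ D} {p' : B ⟶ P} {j : K ⟶ P} (hap : E.conflation a p)
    (hiq : E.conflation i q) (hp : IsPushout i p p' j) : E.conflation (a ≫ i) p' := by
  obtain ⟨q', hq', hj⟩ := hiq.exists_conflation_of_isPushout hp
  have hker : IsPullback (a ≫ i) (0 : F ⟶ 0) p' (0 : 0 ⟶ P) := by
    simpa using hap.isPullback.paste_horiz (hiq.isPullback_of_isPushout hp)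
  have hdesc : IsDeflation E (biprod.desc p' j) :=
    hj.isDeflation_biprod_desc (by rw [hq']; exact hiq.isDeflation)
  have hdesc_id : IsDeflation E (biprod.desc (𝟙 B) i) :=
    hiq.isDeflation_biprod_desc (by simpa using hiq.isDeflation)
  have hcomp : biprod.map (𝟙 B) p ≫ biprod.desc p' j = biprod.desc (𝟙 B) i ≫ p' := by
    ext <;> simp [hp.w]
  have hdesc_comp : IsDeflation E (biprod.desc (𝟙 B) i ≫ p') :=
    hcomp ▸ (hap.isDeflation.biprod_map_id B).comp hdesc
  exact (hdesc_id.of_comp hdesc_comp hker).conflation_of_isPullback_zero hker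

namespace ExactStructure.conflation

variable {A B C T : 𝒜} {i : A ⟶ B} {d : B ⟶ C}

lemma exists_lift_of_ext1IsZero (h : E.conflation i d) (hT : Ext1IsZero E T A) (g : T ⟶ C) :
    ∃ s : T ⟶ B, s ≫ d = g := by
  obtain ⟨P, f', d', _, _, hp, -⟩ := E.pullback_deflation h g
  obtain ⟨i', -, h'⟩ := h.exists_conflation_of_isPullback hp
  obtain ⟨r, hr⟩ := hT i' d' h'
  obtain ⟨s, hs⟩ := h'.exists_section_of_retraction r hr
  exact ⟨s ≫ f', by rw [Category.assoc, hp.w, reassoc_of% hs]⟩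

lemma exists_extension_of_ext1IsZero (h : E.conflation i d) (hT : Ext1IsZero E C T) (g : A ⟶ T) :
    ∃ s : B ⟶ T, i ≫ s = g := by
  obtain ⟨P, f', i', _, _, hp, -⟩ := E.pushout_inflation h g
  obtain ⟨d', -, h'⟩ := h.exists_conflation_of_isPushout hp
  obtain ⟨r, hr⟩ := hT i' d' h'
  exact ⟨f' ≫ r, by rw [reassoc_of% hp.w, hr, Category.comp_id]⟩

end ExactStructure.conflation

namespace Ext1IsZero

lemma of_retract_right {A B T : 𝒜} (hT : Ext1IsZero E A T) (e : Retract B T) :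
    Ext1IsZero E A B := by
  intro M j d h
  obtain ⟨s, hs⟩ := h.exists_extension_of_ext1IsZero hT e.i
  exact ⟨s ≫ e.r, by rw [reassoc_of% hs, e.retract]⟩

lemma zero_left (B : 𝒜) : Ext1IsZero E 0 B :=
  fun _ _ h ↦ h.exists_retraction_of_section 0 ((isZero_zero 𝒜).eq_of_src _ _)

lemma zero_right (A : 𝒜) : Ext1IsZero E A 0 :=
  fun _ _ _ ↦ ⟨0, (isZero_zero 𝒜).eq_of_src _ _⟩

end Ext1IsZero

lemma WeqO.of_conflation {ω Y : Set 𝒜} (hω : (0 : 𝒜) ∈ ω) {K A B : 𝒜} {k : K ⟶ A} {d : A ⟶ B}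
    (h : E.conflation k d) (hK : K ∈ Y) : WeqO E ω Y d :=
  ⟨0, hω, 0, K, k ≫ biprod.inl, E.conflation_iso (.refl _) (isoBiprodZero (isZero_zero 𝒜)) (.refl _)
    h (by simp) (by simp), hK⟩

lemma WeqO.exists_retract_of_zero {ω Y : Set 𝒜} {B : 𝒜} (h : WeqO E ω Y (0 : B ⟶ (0 : 𝒜))) :
    ∃ K ∈ Y, Nonempty (Retract B K) := by
  obtain ⟨W, -, t, K, k, hk, hK⟩ := h
  obtain ⟨s, hs, -⟩ := hk.isPullback.exists_lift biprod.inl 0 (by simp)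
  exact ⟨K, hK, ⟨⟨s, k ≫ biprod.fst, by simp [reassoc_of% hs]⟩⟩⟩

namespace IsCotorsionPair

variable {X Y : Set 𝒜}

lemma ext1IsZero (hcp : IsCotorsionPair E X Y) {A B : 𝒜} (hA : A ∈ X) (hB : B ∈ Y) :
    Ext1IsZero E A B :=
  (hcp.1 A).1 hA B hB

lemma zero_mem (hcp : IsCotorsionPair E X Y) : (0 : 𝒜) ∈ X ∩ Y :=
  ⟨(hcp.1 0).2 fun B _ ↦ Ext1IsZero.zero_left B, (hcp.2 0).2 fun A _ ↦ Ext1IsZero.zero_right A⟩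

lemma mem_right_of_retract (hcp : IsCotorsionPair E X Y) {B B' : 𝒜} (e : Retract B B')
    (hB' : B' ∈ Y) : B ∈ Y :=
  (hcp.2 B).2 fun _ hA ↦ Ext1IsZero.of_retract_right (hcp.ext1IsZero hA hB') e

theorem cokernel_mem_right (hcp : IsCotorsionPair E X Y)
    (hweq : (WeqO E (X ∩ Y) Y).HasOfPrecompProperty (WeqO E (X ∩ Y) Y))
    {K A B : 𝒜} {i : K ⟶ A} {d : A ⟶ B} (h : E.conflation i d) (hK : K ∈ Y) (hA : A ∈ Y) :
    B ∈ Y := by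
  have hd : WeqO E (X ∩ Y) Y d := .of_conflation hcp.zero_mem h hK
  have hA0 : WeqO E (X ∩ Y) Y (0 : A ⟶ (0 : 𝒜)) :=
    .of_conflation hcp.zero_mem (E.conflation_id_zero A) hA
  have hB0 : WeqO E (X ∩ Y) Y (0 : B ⟶ (0 : 𝒜)) := hweq.of_precomp d 0 hd (by simpa using hA0)
  obtain ⟨L, hL, ⟨e⟩⟩ := hB0.exists_retract_of_zero
  exact hcp.mem_right_of_retract e hL

theorem isHereditaryCP_of_cokernel_mem (hcp : IsCotorsionPair E X Y)
    (henough : ∀ A : 𝒜, ∃ B ∈ Y, ∃ i : A ⟶ B, IsInflation E i)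
    (hcoker : ∀ {K A B : 𝒜} (i : K ⟶ A) (d : A ⟶ B), E.conflation i d → K ∈ Y → A ∈ Y → B ∈ Y) :
    IsHereditaryCP E X Y := by
  refine ⟨fun {K A B} i d h hA hB ↦ (hcp.1 K).2 fun F hF M j p hM ↦ ?_, hcoker⟩
  obtain ⟨F', hF', u, _, _, hu⟩ := henough M
  obtain ⟨C, p', u', _, _, hpo, -⟩ := E.pushout_inflation hu p
  have hFC : E.conflation (j ≫ u) p' := hM.comp_inflation hu hpo
  have hC : C ∈ Y := hcoker _ _ hFC hF hF'
  obtain ⟨g, hg⟩ := h.exists_extension_of_ext1IsZero (hcp.ext1IsZero hB hC) u'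
  obtain ⟨t, ht⟩ := hFC.exists_lift_of_ext1IsZero (hcp.ext1IsZero hA hF) g
  obtain ⟨s, -, hs⟩ :=
    (hu.isPullback_of_isPushout hpo).exists_lift (i ≫ t) (𝟙 K) (by simp [ht, hg])
  exact hM.exists_retraction_of_section s hs

end IsCotorsionPair

theorem stmt_3_general (E : ExactStructure 𝒜) (X Y : Set 𝒜) (hcp : IsCotorsionPair E X Y)
    (henough : ∀ A : 𝒜, ∃ B ∈ Y, ∃ i : A ⟶ B, IsInflation E i)
    (hweq : (WeqO E (X ∩ Y) Y).HasOfPrecompProperty (WeqO E (X ∩ Y) Y)) :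
    IsHereditaryCP E X Y :=
  hcp.isHereditaryCP_of_cokernel_mem henough fun _ _ ↦ hcp.cokernel_mem_right hweq

/-- If the `ω`-construction yields a model structure, the complete cotorsion pair
is hereditary. -/
theorem stmt_3 (E : ExactStructure 𝒜) (hwic : IsWIC E) (X Y : Set 𝒜)
    (hcp : IsCotorsionPair E X Y) (hcomp : IsCompleteCP E X Y)
    (hms : IsModelStructure (CoFibO E X) (FibO (X ∩ Y)) (WeqO E (X ∩ Y) Y)) :
    IsHereditaryCP E X Y :=
  stmt_3_general E X Y hcp
    (fun A ↦ let ⟨_, B, D, i, d, h, _, hB⟩ := hcomp A; ⟨B, hB, i, D, d, h⟩) ⟨hms.weq_cancel_left⟩
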